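/- arXiv:2506.04208 — 2 statements merged into one kernel-verified Lean document; each statement's English description precedes it below -/
import Mathlib

section
/- Let K ⊆ ℝ^m be a subspace, let 0 ≤ ε₁ < 1 and 0 ≤ ε₂ < 1, let Ω₁ ∈ ℝ^{s₁×m} be an ε₁-subspace embedding for K, and let Ω₂ ∈ ℝ^{s₂×s₁} be an ε₂-subspace embedding for the image subspace Ω₁(K) ⊆ ℝ^{s₁}. Set ε_s = ε₁ + ε₂ − ε₁ε₂ and ε_b = ε₁ + ε₂ + ε₁ε₂. Then for every x ∈ K, √(1−ε_s)·‖x‖₂ ≤ ‖Ω₂Ω₁x‖₂ ≤ √(1+ε_b)·‖x‖₂. -/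
open scoped BigOperators

/-- Euclidean 2-norm of a vector in `Fin m → ℝ`. -/
noncomputable def evNorm {m : ℕ} (x : Fin m → ℝ) : ℝ :=
  Real.sqrt (∑ i, x i ^ 2)

/-- Euclidean inner product of vectors in `Fin m → ℝ`. -/
noncomputable def evInner {m : ℕ} (x y : Fin m → ℝ) : ℝ :=
  ∑ i, x i * y i

/-- `[X]_g`: the maximum Euclidean 2-norm among the columns of `X`. -/
noncomputable def gMax {m n : ℕ} (X : Matrix (Fin m) (Fin n) ℝ) : ℝ :=
  ⨆ j : Fin n, evNorm (fun i => X i j)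

/-- `‖X‖_g = √n · [X]_g` where `n` is the number of columns of `X`. -/
noncomputable def gNorm {m n : ℕ} (X : Matrix (Fin m) (Fin n) ℝ) : ℝ :=
  Real.sqrt n * gMax X

/-- Spectral norm (largest singular value): supremum of `‖Xv‖₂` over unit vectors `v`. -/
noncomputable def matrixSpectralNorm {m n : ℕ} (X : Matrix (Fin m) (Fin n) ℝ) : ℝ :=
  ⨆ v : {v : Fin n → ℝ // evNorm v = 1}, evNorm (X.mulVec v.1)

/-- Smallest singular value: infimum of `‖Xv‖₂` over unit vectors `v`. -/
noncomputable def sigmaMin {m n : ℕ} (X : Matrix (Fin m) (Fin n) ℝ) : ℝ :=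
  ⨅ v : {v : Fin n → ℝ // evNorm v = 1}, evNorm (X.mulVec v.1)

/-- Frobenius norm of a real matrix. -/
noncomputable def frobeniusNorm {m n : ℕ} (X : Matrix (Fin m) (Fin n) ℝ) : ℝ :=
  Real.sqrt (∑ i, ∑ j, X i j ^ 2)

/-- `Ω` is an `ε`-subspace embedding for the subspace `K ⊆ ℝ^m`. -/
def IsSubspaceEmbedding {s m : ℕ} (ε : ℝ) (Ω : Matrix (Fin s) (Fin m) ℝ)
    (K : Submodule ℝ (Fin m → ℝ)) : Prop :=
  ∀ x ∈ K, ∀ y ∈ K,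
    |evInner x y - evInner (Ω.mulVec x) (Ω.mulVec y)| ≤ ε * evNorm x * evNorm y

/-- Column space of a matrix: the span of its columns. -/
noncomputable def colSpace {m n : ℕ} (X : Matrix (Fin m) (Fin n) ℝ) :
    Submodule ℝ (Fin m → ℝ) :=
  Submodule.span ℝ (Set.range fun j : Fin n => fun i => X i j)

/-! An `ε`-embedding changes squared norms by a factor between `1 - ε` and `1 + ε`. Two successive
embeddings multiply these factors: `1 - ε_s = (1 - ε₂)(1 - ε₁)` and `1 + ε_b = (1 + ε₂)(1 + ε₁)`. -/

theorem evNorm_nonneg {m : ℕ} (x : Fin m → ℝ) : 0 ≤ evNorm x :=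
  Real.sqrt_nonneg _

theorem evInner_self {m : ℕ} (x : Fin m → ℝ) : evInner x x = evNorm x ^ 2 := by
  rw [evNorm, Real.sq_sqrt (by positivity)]
  simp only [evInner, sq]

namespace IsSubspaceEmbedding

section Single

variable {s m : ℕ} {ε : ℝ} {Ω : Matrix (Fin s) (Fin m) ℝ} {K : Submodule ℝ (Fin m → ℝ)}
  {x : Fin m → ℝ}

theorem abs_evNorm_sq_sub_le (hΩ : IsSubspaceEmbedding ε Ω K) (hx : x ∈ K) :
    |evNorm x ^ 2 - evNorm (Ω.mulVec x) ^ 2| ≤ ε * evNorm x ^ 2 := by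
  simpa only [evInner_self, mul_assoc, ← sq] using hΩ x hx x hx

theorem sqrt_mul_evNorm_le_evNorm_mulVec (hΩ : IsSubspaceEmbedding ε Ω K) (hx : x ∈ K) :
    √(1 - ε) * evNorm x ≤ evNorm (Ω.mulVec x) := by
  have lower_sq : (1 - ε) * evNorm x ^ 2 ≤ evNorm (Ω.mulVec x) ^ 2 := by
    linarith [(abs_le.mp (hΩ.abs_evNorm_sq_sub_le hx)).2]
  calc √(1 - ε) * evNorm x = √((1 - ε) * evNorm x ^ 2) := by
        rw [Real.sqrt_mul' _ (sq_nonneg _), Real.sqrt_sq (evNorm_nonneg x)]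
    _ ≤ evNorm (Ω.mulVec x) := Real.sqrt_le_iff.mpr ⟨evNorm_nonneg _, lower_sq⟩

theorem evNorm_mulVec_le (hΩ : IsSubspaceEmbedding ε Ω K) (hx : x ∈ K) :
    evNorm (Ω.mulVec x) ≤ √(1 + ε) * evNorm x := by
  have upper_sq : evNorm (Ω.mulVec x) ^ 2 ≤ (1 + ε) * evNorm x ^ 2 := by
    linarith [(abs_le.mp (hΩ.abs_evNorm_sq_sub_le hx)).1]
  calc evNorm (Ω.mulVec x) ≤ √((1 + ε) * evNorm x ^ 2) := Real.le_sqrt_of_sq_le upper_sq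
    _ = √(1 + ε) * evNorm x := by
        rw [Real.sqrt_mul' _ (sq_nonneg _), Real.sqrt_sq (evNorm_nonneg x)]

end Single

section Composition

variable {s₁ s₂ m : ℕ} {ε₁ ε₂ : ℝ} {K : Submodule ℝ (Fin m → ℝ)}
  {Ω₁ : Matrix (Fin s₁) (Fin m) ℝ} {Ω₂ : Matrix (Fin s₂) (Fin s₁) ℝ} {x : Fin m → ℝ}

theorem sqrt_mul_evNorm_le_evNorm_mulVec_mulVec (hε₂ : ε₂ ≤ 1) (hΩ₁ : IsSubspaceEmbedding ε₁ Ω₁ K)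
    (hΩ₂ : IsSubspaceEmbedding ε₂ Ω₂ (K.map Ω₁.mulVecLin)) (hx : x ∈ K) :
    √((1 - ε₂) * (1 - ε₁)) * evNorm x ≤ evNorm (Ω₂.mulVec (Ω₁.mulVec x)) :=
  calc √((1 - ε₂) * (1 - ε₁)) * evNorm x = √(1 - ε₂) * (√(1 - ε₁) * evNorm x) := by
        rw [Real.sqrt_mul (sub_nonneg.mpr hε₂), mul_assoc]
    _ ≤ √(1 - ε₂) * evNorm (Ω₁.mulVec x) := by
        gcongr
        exact hΩ₁.sqrt_mul_evNorm_le_evNorm_mulVec hx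
    _ ≤ evNorm (Ω₂.mulVec (Ω₁.mulVec x)) :=
        hΩ₂.sqrt_mul_evNorm_le_evNorm_mulVec (Submodule.mem_map_of_mem hx)

theorem evNorm_mulVec_mulVec_le (hε₂ : -1 ≤ ε₂) (hΩ₁ : IsSubspaceEmbedding ε₁ Ω₁ K)
    (hΩ₂ : IsSubspaceEmbedding ε₂ Ω₂ (K.map Ω₁.mulVecLin)) (hx : x ∈ K) :
    evNorm (Ω₂.mulVec (Ω₁.mulVec x)) ≤ √((1 + ε₂) * (1 + ε₁)) * evNorm x :=
  calc evNorm (Ω₂.mulVec (Ω₁.mulVec x)) ≤ √(1 + ε₂) * evNorm (Ω₁.mulVec x) :=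
        hΩ₂.evNorm_mulVec_le (Submodule.mem_map_of_mem hx)
    _ ≤ √(1 + ε₂) * (√(1 + ε₁) * evNorm x) := by
        gcongr
        exact hΩ₁.evNorm_mulVec_le hx
    _ = √((1 + ε₂) * (1 + ε₁)) * evNorm x := by
        rw [Real.sqrt_mul (by linarith), mul_assoc]

end Composition

end IsSubspaceEmbedding

/-- Multi-sketching of vectors: if `Ω₁` is an `ε₁`-subspace embedding for `K` and
`Ω₂` is an `ε₂`-subspace embedding for `Ω₁(K)`, then for all `x ∈ K`,
`√(1−ε_s)·‖x‖₂ ≤ ‖Ω₂Ω₁x‖₂ ≤ √(1+ε_b)·‖x‖₂`, where `ε_s = ε₁+ε₂−ε₁ε₂`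
and `ε_b = ε₁+ε₂+ε₁ε₂`. -/
theorem multiSketch_vector_bounds {s₁ s₂ m : ℕ} {ε₁ ε₂ : ℝ}
    (hε₁0 : 0 ≤ ε₁) (hε₁1 : ε₁ < 1) (hε₂0 : 0 ≤ ε₂) (hε₂1 : ε₂ < 1)
    (K : Submodule ℝ (Fin m → ℝ))
    (Ω₁ : Matrix (Fin s₁) (Fin m) ℝ) (Ω₂ : Matrix (Fin s₂) (Fin s₁) ℝ)
    (hΩ₁ : IsSubspaceEmbedding ε₁ Ω₁ K)
    (hΩ₂ : IsSubspaceEmbedding ε₂ Ω₂ (K.map Ω₁.mulVecLin)) :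
    ∀ x ∈ K,
      Real.sqrt (1 - (ε₁ + ε₂ - ε₁ * ε₂)) * evNorm x ≤
          evNorm (Ω₂.mulVec (Ω₁.mulVec x)) ∧
        evNorm (Ω₂.mulVec (Ω₁.mulVec x)) ≤
          Real.sqrt (1 + (ε₁ + ε₂ + ε₁ * ε₂)) * evNorm x := by
  intro x hx
  have lower_factor : 1 - (ε₁ + ε₂ - ε₁ * ε₂) = (1 - ε₂) * (1 - ε₁) := by ring
  have upper_factor : 1 + (ε₁ + ε₂ + ε₁ * ε₂) = (1 + ε₂) * (1 + ε₁) := by ring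
  rw [lower_factor, upper_factor]
  exact ⟨hΩ₁.sqrt_mul_evNorm_le_evNorm_mulVec_mulVec hε₂1.le hΩ₂ hx,
    hΩ₁.evNorm_mulVec_mulVec_le (by linarith) hΩ₂ hx⟩
end

section
/- Let X ∈ ℝ^{m×n} be a nonzero sparse matrix that has at most v columns each containing at most t₁ nonzero entries, while every remaining column contains at most t₂ nonzero entries, and let c = max_{i,j} |x_{ij}| > 0 be the largest absolute value of an entry of X. Then the ratio η = c/‖X‖₂ satisfies 1/√(v·t₁ + n·t₂) ≤ η ≤ 1, where ‖X‖₂ is the spectral norm of X. -/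
open scoped BigOperators

/-- Spectral norm (largest singular value): supremum of `‖Xv‖₂` over unit vectors `v`. -/
noncomputable def matSpectralNorm {m n : ℕ} (X : Matrix (Fin m) (Fin n) ℝ) : ℝ :=
  ⨆ v : {v : Fin n → ℝ // evNorm v = 1}, evNorm (X.mulVec v.1)

/-!
The spectral norm lies between the largest entry `c` and the Frobenius norm: the `(i, j)` entry is
a coordinate of the image of the `j`-th basis vector, and the Frobenius norm is submultiplicative
and agrees with the Euclidean norm on single columns. The squared Frobenius norm is in turn at most
`c²` times the number of nonzero entries, which is counted column by column.
-/

open scoped Finset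

section Counting

variable {ι : Type*} [Fintype ι]

lemma sum_norm_sq_le_sq_mul_ncard_support {E : Type*} [SeminormedAddGroup E] {f : ι → E} {c : ℝ}
    (hf : ∀ i, ‖f i‖ ≤ c) : ∑ i, ‖f i‖ ^ 2 ≤ c ^ 2 * {i | f i ≠ 0}.ncard := by
  classical
  have sum_eq : ∑ i with f i ≠ 0, ‖f i‖ ^ 2 = ∑ i, ‖f i‖ ^ 2 :=
    Finset.sum_filter_of_ne fun i _ hi h => hi (by simp [h])
  have ncard_eq : {i | f i ≠ 0}.ncard = #{i | f i ≠ 0} := by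
    rw [← Finset.coe_filter_univ, Set.ncard_coe_finset]
  calc ∑ i, ‖f i‖ ^ 2 = ∑ i with f i ≠ 0, ‖f i‖ ^ 2 := sum_eq.symm
    _ ≤ #{i | f i ≠ 0} • c ^ 2 :=
      Finset.sum_le_card_nsmul _ _ _ fun i _ => pow_le_pow_left₀ (norm_nonneg _) (hf i) 2
    _ = c ^ 2 * {i | f i ≠ 0}.ncard := by rw [ncard_eq, nsmul_eq_mul, mul_comm]

lemma sum_le_card_nsmul_add_card_compl_nsmul [DecidableEq ι] {M : Type*} [AddCommMonoid M]
    [PartialOrder M] [IsOrderedAddMonoid M] {k : ι → M} {S : Finset ι} {a b : M}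
    (hS : ∀ i ∈ S, k i ≤ a) (hSc : ∀ i ∉ S, k i ≤ b) : ∑ i, k i ≤ #S • a + #Sᶜ • b := by
  rw [← Finset.sum_add_sum_compl S k]
  exact add_le_add (Finset.sum_le_card_nsmul _ _ _ hS)
    (Finset.sum_le_card_nsmul _ _ _ fun i hi => hSc i (Finset.mem_compl.mp hi))

end Counting

section L2OpNorm

open WithLp
open scoped Matrix

variable {𝕜 m n : Type*} [RCLike 𝕜] [Fintype m] [Fintype n]

section Frobenius

open scoped Matrix.Norms.Frobenius

lemma norm_toLp_mulVec_le_sqrt_sum_norm_sq_mul (A : Matrix m n 𝕜) (x : n → 𝕜) :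
    ‖toLp 2 (A *ᵥ x)‖ ≤ √(∑ i, ∑ j, ‖A i j‖ ^ 2) * ‖toLp 2 x‖ := by
  have norm_eq : ‖A‖ = √(∑ i, ∑ j, ‖A i j‖ ^ 2) := by
    simp only [Matrix.frobenius_norm_def, Real.rpow_two, Real.sqrt_eq_rpow]
  have mul_le := Matrix.frobenius_norm_mul A (Matrix.replicateCol Unit x)
  rwa [← Matrix.replicateCol_mulVec, Matrix.frobenius_norm_replicateCol,
    Matrix.frobenius_norm_replicateCol, norm_eq] at mul_le

end Frobenius

open scoped Matrix.Norms.L2Operator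

variable [DecidableEq n]

lemma l2_opNorm_le_sqrt_sum_norm_sq (A : Matrix m n 𝕜) :
    ‖A‖ ≤ √(∑ i, ∑ j, ‖A i j‖ ^ 2) :=
  ContinuousLinearMap.opNorm_le_bound _ (Real.sqrt_nonneg _) fun x =>
    norm_toLp_mulVec_le_sqrt_sum_norm_sq_mul A (ofLp x)

lemma norm_entry_le_l2_opNorm (A : Matrix m n 𝕜) (i : m) (j : n) : ‖A i j‖ ≤ ‖A‖ := by
  have norm_col_le : ‖toLp 2 (A.col j)‖ ≤ ‖A‖ := by
    simpa using A.l2_opNorm_mulVec (EuclideanSpace.single j 1)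
  exact (PiLp.norm_apply_le (toLp 2 (A.col j)) i).trans norm_col_le

lemma l2_opNorm_le_mul_sqrt_sum_ncard_support {A : Matrix m n 𝕜} {c : ℝ} (hc : 0 ≤ c)
    (hA : ∀ i j, ‖A i j‖ ≤ c) : ‖A‖ ≤ c * √(∑ j, {i | A i j ≠ 0}.ncard : ℕ) := by
  have sum_sq_le : ∑ i, ∑ j, ‖A i j‖ ^ 2 ≤ c ^ 2 * (∑ j, {i | A i j ≠ 0}.ncard : ℕ) := by
    rw [Finset.sum_comm, Nat.cast_sum, Finset.mul_sum]
    exact Finset.sum_le_sum fun j _ => sum_norm_sq_le_sq_mul_ncard_support fun i => hA i j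
  calc ‖A‖ ≤ √(∑ i, ∑ j, ‖A i j‖ ^ 2) := l2_opNorm_le_sqrt_sum_norm_sq A
    _ ≤ √(c ^ 2 * (∑ j, {i | A i j ≠ 0}.ncard : ℕ)) := Real.sqrt_le_sqrt sum_sq_le
    _ = c * √(∑ j, {i | A i j ≠ 0}.ncard : ℕ) := by
      rw [Real.sqrt_mul (sq_nonneg c), Real.sqrt_sq hc]

theorem sparse_eta_bounds_general {v t₁ t₂ : ℕ} {c : ℝ} (X : Matrix m n 𝕜) (S : Finset n)
    (hScard : #S ≤ v) (hdense : ∀ j ∈ S, {i | X i j ≠ 0}.ncard ≤ t₁)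
    (hsparse : ∀ j ∉ S, {i | X i j ≠ 0}.ncard ≤ t₂)
    (hc : IsGreatest (Set.range fun p : m × n => ‖X p.1 p.2‖) c) (hcpos : 0 < c) :
    1 / √(v * t₁ + Fintype.card n * t₂) ≤ c / ‖X‖ ∧ c / ‖X‖ ≤ 1 := by
  obtain ⟨⟨⟨i, j⟩, norm_entry_eq⟩, hub⟩ := hc
  have c_le : c ≤ ‖X‖ := norm_entry_eq.ge.trans (norm_entry_le_l2_opNorm X i j)
  have norm_pos : 0 < ‖X‖ := hcpos.trans_le c_le
  have nnz_le : ∑ j, {i | X i j ≠ 0}.ncard ≤ v * t₁ + Fintype.card n * t₂ :=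
    (sum_le_card_nsmul_add_card_compl_nsmul hdense hsparse).trans <|
      add_le_add (Nat.mul_le_mul_right _ hScard) (Nat.mul_le_mul_right _ (Finset.card_le_univ _))
  have norm_le : ‖X‖ ≤ c * √(v * t₁ + Fintype.card n * t₂) := by
    refine (l2_opNorm_le_mul_sqrt_sum_ncard_support hcpos.le fun i j => hub ⟨(i, j), rfl⟩).trans ?_
    gcongr
    exact_mod_cast nnz_le
  refine ⟨?_, (div_le_one norm_pos).mpr c_le⟩
  rw [le_div_iff₀ norm_pos, one_div_mul_eq_div]
  exact div_le_of_le_mul₀ (Real.sqrt_nonneg _) hcpos.le norm_le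

end L2OpNorm

section SpectralNorm

open WithLp
open scoped Matrix.Norms.L2Operator

lemma evNorm_eq_norm_toLp {m : ℕ} (x : Fin m → ℝ) : evNorm x = ‖toLp 2 x‖ := by
  simp only [evNorm, EuclideanSpace.norm_eq, Real.norm_eq_abs, sq_abs]

lemma matSpectralNorm_eq_l2_opNorm {m n : ℕ} (X : Matrix (Fin m) (Fin n) ℝ) :
    matSpectralNorm X = ‖X‖ := by
  rw [Matrix.l2_opNorm_def, ← ContinuousLinearMap.sSup_sphere_eq_norm, sSup_image']
  refine Equiv.iSup_congr ((WithLp.equiv 2 _).symm.subtypeEquiv fun v => ?_) fun v => ?_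
  · rw [evNorm_eq_norm_toLp, mem_sphere_zero_iff_norm]
    rfl
  · exact (evNorm_eq_norm_toLp _).symm

end SpectralNorm

/-- Sparse model bound on `η = c/‖X‖₂`: if `X ≠ 0` is sparse (at most `v` designated
columns with at most `t₁` nonzeros each, the rest with at most `t₂` nonzeros each)
and `c > 0` is the largest absolute value of an entry of `X`, then
`1/√(v·t₁ + n·t₂) ≤ c/‖X‖₂ ≤ 1`. -/
theorem sparse_eta_bounds {m n v t₁ t₂ : ℕ} {c : ℝ}
    (X : Matrix (Fin m) (Fin n) ℝ) (hX : X ≠ 0) (S : Finset (Fin n))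
    (hScard : S.card ≤ v)
    (hdense : ∀ j ∈ S, Set.ncard {i : Fin m | X i j ≠ 0} ≤ t₁)
    (hsparse : ∀ j ∉ S, Set.ncard {i : Fin m | X i j ≠ 0} ≤ t₂)
    (hc : IsGreatest (Set.range fun p : Fin m × Fin n => |X p.1 p.2|) c)
    (hcpos : 0 < c) :
    1 / Real.sqrt (v * t₁ + n * t₂) ≤ c / matSpectralNorm X ∧
      c / matSpectralNorm X ≤ 1 := by
  simpa only [matSpectralNorm_eq_l2_opNorm, Fintype.card_fin] using
    sparse_eta_bounds_general X S hScard hdense hsparse hc hcpos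
end
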